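/- There is an absolute constant C ≥ 1 such that for all positive integers m, n and every m-homogeneous polynomial P(z) = ∑_{|α|=m} a_α z^α on ℂ^n, one has ∑_{|α|=m} |a_α| ≤ C^m · (1 + n/m)^{(m-1)/2} · sup_{z ∈ 𝔻^n} |∑_{|α|=m} a_α z^α|. (Estimate of the Sidon constant of the m-homogeneous monomials in n variables.) -/

import Mathlib

open Finset

/-- Evaluation of the `m`-homogeneous polynomial on `ℂ^n` with coefficient family `a`
(indexed by the multi-indices `α` with `|α| = m`) at the point `z`. -/
noncomputable def mhEval (n m : ℕ) (a : (Fin n → ℕ) → ℂ) (z : Fin n → ℂ) : ℂ :=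
  ∑ α ∈ Finset.Nat.antidiagonalTuple n m, a α * ∏ i, z i ^ α i

/-- The supremum of `|P(z)|` over the open unit polydisc `𝔻^n`. -/
noncomputable def polydiscSup (n m : ℕ) (a : (Fin n → ℕ) → ℂ) : ℝ :=
  sSup {x : ℝ | ∃ z : Fin n → ℂ, (∀ i, ‖z i‖ < 1) ∧ x = ‖mhEval n m a z‖}

/-!
Write `P_k = z_k ∂P/∂z_k`, whose coefficients are `α_k a_α`. Every `α` with `|α| = m ≥ 1` has some
`α_k ≠ 0`, so `∑ |a_α|` is at most the sum over `k` of the `ℓ¹` norms of the coefficients of the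
`P_k`. At most `e^m (1 + n/m)^(m-1)` monomials occur in `P_k`, so Cauchy–Schwarz replaces the `ℓ¹`
norms by `ℓ²` norms at the price of the square root of this number. By Parseval, the `ℓ²` norm is
the norm of `P_k` in `L²(𝕋^n)`, and it is at most `2^m ‖P_k‖_{L¹(𝕋^n)}`: this hypercontractivity
follows from `‖Q‖_{L⁴} ≤ 2^{m/2} ‖Q‖_{L²}`, which in turn is Parseval for `Q²`. Finally, for every
`w ∈ 𝕋^n`, `∑_k |P_k(w)|` is the derivative at `t = 0` of
`t ↦ P(w_1 (1 + t u_1), …, w_n (1 + t u_n))` for suitable unimodular `u_k`, which Cauchy's estimate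
bounds by `3^m sup_{𝔻^n} |P|`.
-/

open Finset.Nat (antidiagonalTuple mem_antidiagonalTuple)
open MeasureTheory

variable {n m : ℕ}

section Counting

lemma card_filter_add_eq_le {ι : Type*} [Fintype ι] (s : Finset ((ι → ℕ) × (ι → ℕ)))
    (γ : ι → ℕ) : #{p ∈ s | p.1 + p.2 = γ} ≤ 2 ^ ∑ i, γ i := by
  classical
  calc #{p ∈ s | p.1 + p.2 = γ}
    _ ≤ #(Iic γ) := by
      refine card_le_card_of_injOn Prod.fst (fun p hp ↦ ?_) fun p hp q hq hpq ↦ ?_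
      · exact mem_Iic.2 (le_self_add.trans_eq (mem_filter.1 hp).2)
      · have hsum : p.1 + p.2 = q.1 + q.2 := (mem_filter.1 hp).2.trans (mem_filter.1 hq).2.symm
        exact Prod.ext hpq (add_left_cancel (hpq ▸ hsum))
    _ = ∏ i, (γ i + 1) := by simp only [Pi.card_Iic, Nat.card_Iic]
    _ ≤ ∏ i, 2 ^ γ i := prod_le_prod' fun i _ ↦ Nat.lt_two_pow_self
    _ = 2 ^ ∑ i, γ i := prod_pow_eq_pow_sum _ _ _

lemma card_antidiagonalTuple (n m : ℕ) : #(antidiagonalTuple n m) = (n + m - 1).choose m := by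
  rw [← piAntidiag_univ_fin_eq_antidiagonalTuple, ← map_sym_eq_piAntidiag, card_map, sym_univ,
    card_univ, Sym.card_sym_eq_choose, Fintype.card_fin]

lemma card_filter_antidiagonalTuple_le (n m : ℕ) (k : Fin n) :
    #{α ∈ antidiagonalTuple n m | α k ≠ 0} ≤ #(antidiagonalTuple n (m - 1)) := by
  refine (card_le_card fun α hα ↦ ?_).trans (card_image_le (f := (· + Pi.single k 1)))
  obtain ⟨hα, hk⟩ := mem_filter.1 hα
  have hle : Pi.single k 1 ≤ α :=
    update_le_iff.2 ⟨Nat.one_le_iff_ne_zero.2 hk, fun i _ ↦ (α i).zero_le⟩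
  have hsum : ∑ i, (α - Pi.single k 1 + Pi.single k 1 : Fin n → ℕ) i = m := by
    rw [tsub_add_cancel_of_le hle, mem_antidiagonalTuple.1 hα]
  simp only [Pi.add_apply, sum_add_distrib, sum_pi_single', mem_univ, if_true] at hsum
  exact mem_image.2 ⟨α - Pi.single k 1, mem_antidiagonalTuple.2 (by omega),
    tsub_add_cancel_of_le hle⟩

lemma card_antidiagonalTuple_pred_le (n : ℕ) (hm : m ≠ 0) :
    (#(antidiagonalTuple n (m - 1)) : ℝ) ≤ Real.exp m * (1 + n / m) ^ (m - 1) := by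
  have hchoose : n + (m - 1) - 1 ≤ n + m := by omega
  calc (#(antidiagonalTuple n (m - 1)) : ℝ)
    _ ≤ ((n + m).choose (m - 1) : ℕ) := by
      rw [card_antidiagonalTuple]
      exact_mod_cast Nat.choose_le_choose _ hchoose
    _ ≤ ((n + m : ℕ) : ℝ) ^ (m - 1) / (m - 1).factorial := Nat.choose_le_pow_div _ _
    _ = (m : ℝ) ^ (m - 1) / (m - 1).factorial * (1 + n / m) ^ (m - 1) := by
      rw [div_mul_eq_mul_div, ← mul_pow]
      congr 2
      push_cast
      field_simp
      ring
    _ ≤ Real.exp m * (1 + n / m) ^ (m - 1) := by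
      gcongr
      exact Real.pow_div_factorial_le_exp _ m.cast_nonneg _

lemma sqrt_card_filter_antidiagonalTuple_le (hm : m ≠ 0) (k : Fin n) :
    √(#{α ∈ antidiagonalTuple n m | α k ≠ 0}) ≤
      2 ^ m * (1 + (n : ℝ) / m) ^ (((m : ℝ) - 1) / 2) := by
  refine Real.sqrt_le_iff.2 ⟨by positivity, ?_⟩
  calc (#{α ∈ antidiagonalTuple n m | α k ≠ 0} : ℝ)
    _ ≤ #(antidiagonalTuple n (m - 1)) := mod_cast card_filter_antidiagonalTuple_le n m k
    _ ≤ Real.exp m * (1 + n / m) ^ (m - 1) := card_antidiagonalTuple_pred_le n hm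
    _ ≤ 4 ^ m * (1 + n / m) ^ (m - 1) := by
      rw [← Real.exp_one_pow]
      gcongr
      linarith [Real.exp_one_lt_three]
    _ = (2 ^ m * (1 + (n : ℝ) / m) ^ (((m : ℝ) - 1) / 2)) ^ 2 := by
      rw [mul_pow, ← pow_mul, mul_comm m, pow_mul, ← Real.rpow_mul_natCast (by positivity),
        ← Real.rpow_natCast (1 + _), Nat.cast_pred (Nat.pos_of_ne_zero hm)]
      norm_num

lemma sum_antidiagonalTuple_le_sum_sum_filter (hm : m ≠ 0) {f : (Fin n → ℕ) → ℝ} (hf : 0 ≤ f) :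
    ∑ α ∈ antidiagonalTuple n m, f α ≤ ∑ k, ∑ α ∈ antidiagonalTuple n m with α k ≠ 0, f α := by
  simp only [sum_filter]
  rw [sum_comm]
  refine sum_le_sum fun α hα ↦ ?_
  obtain ⟨k, -, hk⟩ : ∃ k ∈ univ, α k ≠ 0 :=
    exists_ne_zero_of_sum_ne_zero ((mem_antidiagonalTuple.1 hα).trans_ne hm)
  calc f α = if α k ≠ 0 then f α else 0 := (if_pos hk).symm
    _ ≤ ∑ k, if α k ≠ 0 then f α else 0 :=
      single_le_sum (f := fun k ↦ if α k ≠ 0 then f α else 0)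
        (fun k _ ↦ ite_nonneg (hf α) le_rfl) (mem_univ k)

end Counting

section Inequalities

lemma sum_norm_sum_fiber_sq_le {ι κ E : Type*} [DecidableEq κ] [SeminormedAddCommGroup E]
    {s : Finset ι} {t : Finset κ} {g : ι → κ} (hg : ∀ i ∈ s, g i ∈ t) {K : ℝ}
    (hK : ∀ k ∈ t, (#{i ∈ s | g i = k} : ℝ) ≤ K) (x : ι → E) :
    ∑ k ∈ t, ‖∑ i ∈ s with g i = k, x i‖ ^ 2 ≤ K * ∑ i ∈ s, ‖x i‖ ^ 2 := by
  rw [← sum_fiberwise_of_maps_to hg, mul_sum]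
  refine sum_le_sum fun k hk ↦ ?_
  calc ‖∑ i ∈ s with g i = k, x i‖ ^ 2
    _ ≤ (∑ i ∈ s with g i = k, ‖x i‖) ^ 2 := by gcongr; exact norm_sum_le _ _
    _ ≤ #{i ∈ s | g i = k} * ∑ i ∈ s with g i = k, ‖x i‖ ^ 2 := sq_sum_le_card_mul_sum_sq
    _ ≤ K * ∑ i ∈ s with g i = k, ‖x i‖ ^ 2 := by gcongr; exact hK k hk

lemma sqrt_integral_sq_le_of_integral_pow_four_le {Ω : Type*} [MeasurableSpace Ω] {μ : Measure Ω}
    {f : Ω → ℝ} (hf : 0 ≤ f) (hint : Integrable f μ) (hint4 : Integrable (fun x ↦ f x ^ 4) μ)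
    {K : ℝ} (hK : 0 < K) (h : ∫ x, f x ^ 4 ∂μ ≤ K ^ 2 * (∫ x, f x ^ 2 ∂μ) ^ 2) :
    √(∫ x, f x ^ 2 ∂μ) ≤ K * ∫ x, f x ∂μ := by
  set r := √(∫ x, f x ^ 2 ∂μ)
  have hr_sq : ∫ x, f x ^ 2 ∂μ = r ^ 2 :=
    (Real.sq_sqrt (integral_nonneg fun x ↦ sq_nonneg (f x))).symm
  obtain hr | hr : 0 = r ∨ 0 < r := (Real.sqrt_nonneg _).eq_or_lt
  · rw [← hr]
    exact mul_nonneg hK.le (integral_nonneg hf)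
  set s := K * r
  have hs : 0 < s := mul_pos hK hr
  -- AM-GM for `s f`, `s f` and `f ^ 4 / s ^ 2`, whose geometric mean is `f ^ 2`.
  have hpointwise (x : Ω) : 3 * s ^ 2 * f x ^ 2 ≤ 2 * s ^ 3 * f x + f x ^ 4 := by
    have : 0 ≤ f x * (f x - s) ^ 2 * (f x + 2 * s) :=
      mul_nonneg (mul_nonneg (hf x) (sq_nonneg _)) (add_nonneg (hf x) (by linarith))
    linarith
  have hintegrated : 3 * s ^ 2 * r ^ 2 ≤ 2 * s ^ 3 * ∫ x, f x ∂μ + s ^ 2 * r ^ 2 := by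
    calc 3 * s ^ 2 * r ^ 2
      _ = ∫ x, 3 * s ^ 2 * f x ^ 2 ∂μ := by rw [integral_const_mul, hr_sq]
      _ ≤ ∫ x, 2 * s ^ 3 * f x + f x ^ 4 ∂μ :=
        integral_mono_of_nonneg (.of_forall fun x ↦ by positivity)
          ((hint.const_mul _).add hint4) (.of_forall hpointwise)
      _ = 2 * s ^ 3 * ∫ x, f x ∂μ + ∫ x, f x ^ 4 ∂μ := by
        rw [integral_add (hint.const_mul _) hint4, integral_const_mul]
      _ ≤ 2 * s ^ 3 * ∫ x, f x ∂μ + s ^ 2 * r ^ 2 := by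
        gcongr
        exact h.trans_eq (by rw [hr_sq]; ring)
  refine le_of_mul_le_mul_left ?_ (by positivity : 0 < 2 * s ^ 2 * r)
  calc 2 * s ^ 2 * r * r ≤ 2 * s ^ 3 * ∫ x, f x ∂μ := by linarith
    _ = 2 * s ^ 2 * r * (K * ∫ x, f x ∂μ) := by ring

lemma norm_sum_smul_sq_of_orthonormal {𝕜 E ι : Type*} [RCLike 𝕜] [SeminormedAddCommGroup E]
    [InnerProductSpace 𝕜 E] {v : ι → E} (hv : Orthonormal 𝕜 v) (s : Finset ι) (c : ι → 𝕜) :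
    ‖∑ i ∈ s, c i • v i‖ ^ 2 = ∑ i ∈ s, ‖c i‖ ^ 2 := by
  apply RCLike.ofReal_injective (K := 𝕜)
  push_cast
  rw [← inner_self_eq_norm_sq_to_K (𝕜 := 𝕜), hv.inner_sum]
  simp only [RCLike.conj_mul]

end Inequalities

section Polydisc

lemma mhEval_smul (a : (Fin n → ℕ) → ℂ) (r : ℂ) (z : Fin n → ℂ) :
    mhEval n m a (r • z) = r ^ m * mhEval n m a z := by
  rw [mhEval, mhEval, mul_sum]
  refine sum_congr rfl fun α hα ↦ ?_
  simp only [Pi.smul_apply, smul_eq_mul, mul_pow, prod_mul_distrib, prod_pow_eq_pow_sum]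
  rw [mem_antidiagonalTuple.1 hα]
  ring

lemma norm_mhEval_le_sum (a : (Fin n → ℕ) → ℂ) {z : Fin n → ℂ} (hz : ∀ i, ‖z i‖ ≤ 1) :
    ‖mhEval n m a z‖ ≤ ∑ α ∈ antidiagonalTuple n m, ‖a α‖ := by
  refine norm_sum_le_of_le _ fun α _ ↦ ?_
  rw [norm_mul, norm_prod]
  refine mul_le_of_le_one_right (norm_nonneg _) (prod_le_one (fun i _ ↦ norm_nonneg _) fun i _ ↦ ?_)
  rw [norm_pow]
  exact pow_le_one₀ (norm_nonneg _) (hz i)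

lemma norm_mhEval_le_polydiscSup (a : (Fin n → ℕ) → ℂ) {z : Fin n → ℂ} (hz : ∀ i, ‖z i‖ < 1) :
    ‖mhEval n m a z‖ ≤ polydiscSup n m a := by
  refine le_csSup ⟨∑ α ∈ antidiagonalTuple n m, ‖a α‖, ?_⟩ ⟨z, hz, rfl⟩
  rintro x ⟨w, hw, rfl⟩
  exact norm_mhEval_le_sum a fun i ↦ (hw i).le

lemma norm_mhEval_le_pow_mul_polydiscSup (a : (Fin n → ℕ) → ℂ) {r : ℝ} (hr : 0 < r)
    {z : Fin n → ℂ} (hz : ∀ i, ‖z i‖ < r) : ‖mhEval n m a z‖ ≤ r ^ m * polydiscSup n m a := by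
  have hr' : (r : ℂ) ≠ 0 := by exact_mod_cast hr.ne'
  have hscaled (i : Fin n) : ‖((r : ℂ)⁻¹ • z) i‖ < 1 := by
    rw [Pi.smul_apply, norm_smul, norm_inv, Complex.norm_of_nonneg hr.le, inv_mul_lt_one₀ hr]
    exact hz i
  calc ‖mhEval n m a z‖ = r ^ m * ‖mhEval n m a ((r : ℂ)⁻¹ • z)‖ := by
        rw [← smul_inv_smul₀ hr' z, mhEval_smul, norm_mul, norm_pow, Complex.norm_of_nonneg hr.le,
          smul_inv_smul₀ hr']
    _ ≤ r ^ m * polydiscSup n m a := by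
        gcongr
        exact norm_mhEval_le_polydiscSup a hscaled

end Polydisc

section Product

/-- The coefficients of the product of the `m`-homogeneous polynomial with coefficients `a` and the
`l`-homogeneous polynomial with coefficients `b`. -/
noncomputable def mulCoeff (m l : ℕ) (a b : (Fin n → ℕ) → ℂ) (γ : Fin n → ℕ) : ℂ :=
  ∑ p ∈ antidiagonalTuple n m ×ˢ antidiagonalTuple n l with p.1 + p.2 = γ, a p.1 * b p.2

lemma add_mem_antidiagonalTuple {l : ℕ} {p : (Fin n → ℕ) × (Fin n → ℕ)}
    (hp : p ∈ antidiagonalTuple n m ×ˢ antidiagonalTuple n l) :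
    p.1 + p.2 ∈ antidiagonalTuple n (m + l) := by
  simp only [mem_product, mem_antidiagonalTuple] at hp
  simp only [mem_antidiagonalTuple, Pi.add_apply, sum_add_distrib, hp]

lemma mhEval_mul_mhEval (m l : ℕ) (a b : (Fin n → ℕ) → ℂ) (z : Fin n → ℂ) :
    mhEval n m a z * mhEval n l b z = mhEval n (m + l) (mulCoeff m l a b) z := by
  rw [mhEval, mhEval, mhEval, sum_mul_sum, ← sum_product',
    ← sum_fiberwise_of_maps_to fun _ ↦ add_mem_antidiagonalTuple]
  refine sum_congr rfl fun γ _ ↦ ?_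
  rw [mulCoeff, sum_mul]
  refine sum_congr rfl fun p hp ↦ ?_
  rw [← (mem_filter.1 hp).2]
  simp only [Pi.add_apply, pow_add, prod_mul_distrib]
  ring

lemma sum_norm_mulCoeff_sq_le (m l : ℕ) (a b : (Fin n → ℕ) → ℂ) :
    ∑ γ ∈ antidiagonalTuple n (m + l), ‖mulCoeff m l a b γ‖ ^ 2 ≤ 2 ^ (m + l) *
      ((∑ α ∈ antidiagonalTuple n m, ‖a α‖ ^ 2) * ∑ β ∈ antidiagonalTuple n l, ‖b β‖ ^ 2) := by
  have hfiber (γ) (hγ : γ ∈ antidiagonalTuple n (m + l)) :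
      (#{p ∈ antidiagonalTuple n m ×ˢ antidiagonalTuple n l | p.1 + p.2 = γ} : ℝ)
        ≤ 2 ^ (m + l) := by
    rw [← mem_antidiagonalTuple.1 hγ]
    exact_mod_cast card_filter_add_eq_le _ γ
  refine (sum_norm_sum_fiber_sq_le (fun _ ↦ add_mem_antidiagonalTuple) hfiber _).trans_eq ?_
  simp only [norm_mul, mul_pow, sum_mul_sum, sum_product]

end Product

section EulerDerivative

/-- The coefficients of `z_k ∂P/∂z_k`, where `P` is the homogeneous polynomial with
coefficients `a`. -/
def eulerCoeff (a : (Fin n → ℕ) → ℂ) (k : Fin n) (α : Fin n → ℕ) : ℂ :=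
  α k * a α

lemma norm_le_norm_eulerCoeff (a : (Fin n → ℕ) → ℂ) {k : Fin n} {α : Fin n → ℕ} (hk : α k ≠ 0) :
    ‖a α‖ ≤ ‖eulerCoeff a k α‖ := by
  rw [eulerCoeff, norm_mul, Complex.norm_natCast]
  exact le_mul_of_one_le_left (norm_nonneg _) (mod_cast Nat.one_le_iff_ne_zero.2 hk)

lemma hasDerivAt_prod_one_add_mul_pow {ι 𝕜 : Type*} [Fintype ι] [NontriviallyNormedField 𝕜]
    (u : ι → 𝕜) (α : ι → ℕ) :
    HasDerivAt (fun t ↦ ∏ i, (1 + t * u i) ^ α i) (∑ k, α k * u k) 0 := by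
  classical
  have hfactor (i : ι) : HasDerivAt (fun t ↦ (1 + t * u i) ^ α i) (α i * u i) 0 := by
    simpa using (((hasDerivAt_id (0 : 𝕜)).mul_const (u i)).const_add 1).fun_pow (α i)
  simpa using HasDerivAt.fun_finsetProd fun i (_ : i ∈ univ) ↦ hfactor i

lemma hasDerivAt_mhEval_mul_one_add (a : (Fin n → ℕ) → ℂ) (w u : Fin n → ℂ) :
    HasDerivAt (fun t : ℂ ↦ mhEval n m a fun i ↦ w i * (1 + t * u i))
      (∑ k, u k * mhEval n m (eulerCoeff a k) w) 0 := by
  have hderiv : ∑ k, u k * mhEval n m (eulerCoeff a k) w =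
      ∑ α ∈ antidiagonalTuple n m, a α * (∏ i, w i ^ α i) * ∑ k, α k * u k := by
    simp only [mhEval, eulerCoeff, mul_sum]
    rw [sum_comm]
    exact sum_congr rfl fun α _ ↦ sum_congr rfl fun k _ ↦ by ring
  rw [hderiv]
  simp only [mhEval, mul_pow, prod_mul_distrib, ← mul_assoc]
  exact HasDerivAt.fun_sum fun α _ ↦ (hasDerivAt_prod_one_add_mul_pow u α).const_mul _

lemma sum_norm_mhEval_eulerCoeff_le (a : (Fin n → ℕ) → ℂ) {w : Fin n → ℂ} (hw : ∀ i, ‖w i‖ ≤ 1) :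
    ∑ k, ‖mhEval n m (eulerCoeff a k) w‖ ≤ 3 ^ m * polydiscSup n m a := by
  choose u hu hunorm using fun k ↦ RCLike.exists_norm_eq_mul_self (mhEval n m (eulerCoeff a k) w)
  set f : ℂ → ℂ := fun t ↦ mhEval n m a fun i ↦ w i * (1 + t * u i)
  have hf : Differentiable ℂ f := by
    simp only [f, mhEval]
    fun_prop
  have hbound (t : ℂ) (ht : t ∈ Metric.sphere 0 1) : ‖f t‖ ≤ 3 ^ m * polydiscSup n m a := by
    refine norm_mhEval_le_pow_mul_polydiscSup a three_pos fun i ↦ ?_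
    calc ‖w i * (1 + t * u i)‖ ≤ 1 * (1 + 1 * 1) := by
          rw [norm_mul]
          gcongr
          · exact hw i
          · refine (norm_add_le _ _).trans_eq ?_
            rw [norm_mul, mem_sphere_zero_iff_norm.1 ht, hu, norm_one]
      _ < 3 := by norm_num
  calc ∑ k, ‖mhEval n m (eulerCoeff a k) w‖
    _ = ‖((∑ k, ‖mhEval n m (eulerCoeff a k) w‖ : ℝ) : ℂ)‖ :=
      (Complex.norm_of_nonneg (sum_nonneg fun _ _ ↦ norm_nonneg _)).symm
    _ = ‖deriv f 0‖ := by
      rw [(hasDerivAt_mhEval_mul_one_add a w u).deriv, Complex.ofReal_sum]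
      exact congrArg norm (sum_congr rfl fun k _ ↦ hunorm k)
    _ ≤ 3 ^ m * polydiscSup n m a / 1 :=
      Complex.norm_deriv_le_of_forall_mem_sphere_norm_le one_pos hf.diffContOnCl hbound
    _ = 3 ^ m * polydiscSup n m a := div_one _

lemma sum_filter_norm_le_mul_sqrt_sum_norm_eulerCoeff_sq (a : (Fin n → ℕ) → ℂ) (k : Fin n)
    (hm : m ≠ 0) :
    ∑ α ∈ antidiagonalTuple n m with α k ≠ 0, ‖a α‖ ≤
      2 ^ m * (1 + (n : ℝ) / m) ^ (((m : ℝ) - 1) / 2) *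
        √(∑ α ∈ antidiagonalTuple n m, ‖eulerCoeff a k α‖ ^ 2) := by
  set S := {α ∈ antidiagonalTuple n m | α k ≠ 0}
  calc ∑ α ∈ S, ‖a α‖
    _ ≤ ∑ α ∈ S, 1 * ‖eulerCoeff a k α‖ := sum_le_sum fun α hα ↦ by
      rw [one_mul]
      exact norm_le_norm_eulerCoeff a (mem_filter.1 hα).2
    _ ≤ √(∑ α ∈ S, 1 ^ 2) * √(∑ α ∈ S, ‖eulerCoeff a k α‖ ^ 2) :=
      Real.sum_mul_le_sqrt_mul_sqrt _ _ _
    _ = √(#S) * √(∑ α ∈ S, ‖eulerCoeff a k α‖ ^ 2) := by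
      rw [one_pow, sum_const, nsmul_one]
    _ ≤ 2 ^ m * (1 + (n : ℝ) / m) ^ (((m : ℝ) - 1) / 2) *
        √(∑ α ∈ antidiagonalTuple n m, ‖eulerCoeff a k α‖ ^ 2) := by
      gcongr
      · exact sqrt_card_filter_antidiagonalTuple_le hm k
      · exact filter_subset _ _

end EulerDerivative

section Torus

/-- Haar probability measure on `ℝ / ℤ`, the normalisation in Mathlib's multivariate Fourier theory;
that theory makes the instance local, so it has to be restated here. -/
noncomputable local instance : MeasureSpace UnitAddCircle := ⟨AddCircle.haarAddCircle⟩

local instance : IsProbabilityMeasure (volume : Measure UnitAddCircle) :=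
  inferInstanceAs (IsProbabilityMeasure AddCircle.haarAddCircle)

/-- The point `(exp (2πi x_1), …, exp (2πi x_n))` of `𝕋^n ⊆ ℂ^n`, which parametrises the values of a
polynomial on the torus by `x ∈ (ℝ/ℤ)^n`. -/
noncomputable def torusPoint (x : UnitAddTorus (Fin n)) (i : Fin n) : ℂ :=
  AddCircle.toCircle (x i)

lemma norm_torusPoint (x : UnitAddTorus (Fin n)) (i : Fin n) : ‖torusPoint x i‖ = 1 :=
  Circle.norm_coe _

lemma prod_torusPoint_pow (α : Fin n → ℕ) (x : UnitAddTorus (Fin n)) :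
    ∏ i, torusPoint x i ^ α i = UnitAddTorus.mFourier (fun i ↦ (α i : ℤ)) x := by
  simp [torusPoint, UnitAddTorus.mFourier, fourier_apply, AddCircle.toCircle_nsmul]

lemma continuous_mhEval_torusPoint (a : (Fin n → ℕ) → ℂ) :
    Continuous fun x ↦ mhEval n m a (torusPoint x) := by
  simp only [mhEval, prod_torusPoint_pow]
  fun_prop

lemma integrable_norm_mhEval_torusPoint_pow (a : (Fin n → ℕ) → ℂ) (j : ℕ) :
    Integrable fun x ↦ ‖mhEval n m a (torusPoint x)‖ ^ j :=
  ((continuous_mhEval_torusPoint a).norm.pow j).integrable_of_hasCompactSupport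
    (HasCompactSupport.of_compactSpace _)

lemma integral_norm_mhEval_torusPoint_sq (a : (Fin n → ℕ) → ℂ) :
    ∫ x, ‖mhEval n m a (torusPoint x)‖ ^ 2 = ∑ α ∈ antidiagonalTuple n m, ‖a α‖ ^ 2 := by
  set e : (Fin n → ℕ) → C(UnitAddTorus (Fin n), ℂ) :=
    fun α ↦ UnitAddTorus.mFourier fun i ↦ (α i : ℤ)
  have he : Orthonormal ℂ fun α ↦ (e α).toLp 2 volume ℂ :=
    UnitAddTorus.orthonormal_mFourier.comp (fun (α : Fin n → ℕ) i ↦ (α i : ℤ))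
      fun α β h ↦ funext fun i ↦ Int.ofNat_injective (congrFun h i)
  set P : C(UnitAddTorus (Fin n), ℂ) := ∑ α ∈ antidiagonalTuple n m, a α • e α
  have hP (x) : P x = mhEval n m a (torusPoint x) := by
    simp [P, e, mhEval, prod_torusPoint_pow]
  have hnorm : ‖P.toLp 2 volume ℂ‖ ^ 2 = ∑ α ∈ antidiagonalTuple n m, ‖a α‖ ^ 2 := by
    rw [← norm_sum_smul_sq_of_orthonormal he]
    simp only [P, map_sum, map_smul]
  have hinner : ∫ x, P x * star (P x) = (‖P.toLp 2 volume ℂ‖ : ℂ) ^ 2 :=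
    (ContinuousMap.inner_toLp volume P P).symm.trans (inner_self_eq_norm_sq_to_K _)
  simp only [hP, RCLike.star_def, Complex.mul_conj'] at hinner
  rw [← hnorm]
  exact_mod_cast hinner

lemma integral_norm_mhEval_torusPoint_pow_four_le (a : (Fin n → ℕ) → ℂ) :
    ∫ x, ‖mhEval n m a (torusPoint x)‖ ^ 4
      ≤ (2 ^ m) ^ 2 * (∫ x, ‖mhEval n m a (torusPoint x)‖ ^ 2) ^ 2 := by
  calc ∫ x, ‖mhEval n m a (torusPoint x)‖ ^ 4
    _ = ∫ x, ‖mhEval n (m + m) (mulCoeff m m a a) (torusPoint x)‖ ^ 2 := by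
      simp only [← mhEval_mul_mhEval, norm_mul]
      ring_nf
    _ ≤ 2 ^ (m + m) * ((∑ α ∈ antidiagonalTuple n m, ‖a α‖ ^ 2) *
          ∑ α ∈ antidiagonalTuple n m, ‖a α‖ ^ 2) := by
      rw [integral_norm_mhEval_torusPoint_sq]
      exact sum_norm_mulCoeff_sq_le m m a a
    _ = (2 ^ m) ^ 2 * (∫ x, ‖mhEval n m a (torusPoint x)‖ ^ 2) ^ 2 := by
      rw [integral_norm_mhEval_torusPoint_sq]
      ring

lemma sqrt_sum_norm_sq_le_integral_norm_mhEval (a : (Fin n → ℕ) → ℂ) :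
    √(∑ α ∈ antidiagonalTuple n m, ‖a α‖ ^ 2)
      ≤ 2 ^ m * ∫ x, ‖mhEval n m a (torusPoint x)‖ := by
  rw [← integral_norm_mhEval_torusPoint_sq]
  refine sqrt_integral_sq_le_of_integral_pow_four_le (fun _ ↦ norm_nonneg _) ?_
    (integrable_norm_mhEval_torusPoint_pow a 4) (by positivity)
    (integral_norm_mhEval_torusPoint_pow_four_le a)
  simpa only [pow_one] using integrable_norm_mhEval_torusPoint_pow a 1

lemma sum_sqrt_sum_norm_eulerCoeff_sq_le (a : (Fin n → ℕ) → ℂ) :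
    ∑ k, √(∑ α ∈ antidiagonalTuple n m, ‖eulerCoeff a k α‖ ^ 2) ≤ 6 ^ m * polydiscSup n m a := by
  have hint (k : Fin n) : Integrable fun x ↦ ‖mhEval n m (eulerCoeff a k) (torusPoint x)‖ := by
    simpa only [pow_one] using integrable_norm_mhEval_torusPoint_pow (eulerCoeff a k) 1
  calc ∑ k, √(∑ α ∈ antidiagonalTuple n m, ‖eulerCoeff a k α‖ ^ 2)
    _ ≤ ∑ k, 2 ^ m * ∫ x, ‖mhEval n m (eulerCoeff a k) (torusPoint x)‖ :=
      sum_le_sum fun k _ ↦ sqrt_sum_norm_sq_le_integral_norm_mhEval (eulerCoeff a k)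
    _ = 2 ^ m * ∫ x, ∑ k, ‖mhEval n m (eulerCoeff a k) (torusPoint x)‖ := by
      rw [integral_finsetSum _ fun k _ ↦ hint k, mul_sum]
    _ ≤ 2 ^ m * ∫ _ : UnitAddTorus (Fin n), 3 ^ m * polydiscSup n m a := by
      gcongr
      · exact integrable_finsetSum _ fun k _ ↦ hint k
      · exact integrable_const _
      · exact fun x ↦ sum_norm_mhEval_eulerCoeff_le a fun i ↦ (norm_torusPoint x i).le
    _ = 6 ^ m * polydiscSup n m a := by
      rw [integral_const, probReal_univ, one_smul, ← mul_assoc, ← mul_pow]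
      norm_num

end Torus

/-- Estimate of the Sidon constant of the `m`-homogeneous monomials in `n` variables. -/
theorem sidon_constant_estimate :
    ∃ C : ℝ, 1 ≤ C ∧ ∀ (m n : ℕ), 0 < m → 0 < n → ∀ a : (Fin n → ℕ) → ℂ,
      ∑ α ∈ Finset.Nat.antidiagonalTuple n m, ‖a α‖
        ≤ C ^ m * (1 + (n : ℝ) / (m : ℝ)) ^ (((m : ℝ) - 1) / 2) * polydiscSup n m a := by
  refine ⟨12, by norm_num, fun m n hm _ a ↦ ?_⟩
  set x : ℝ := (1 + (n : ℝ) / m) ^ (((m : ℝ) - 1) / 2)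
  calc ∑ α ∈ antidiagonalTuple n m, ‖a α‖
    _ ≤ ∑ k, ∑ α ∈ antidiagonalTuple n m with α k ≠ 0, ‖a α‖ :=
      sum_antidiagonalTuple_le_sum_sum_filter hm.ne' fun _ ↦ norm_nonneg _
    _ ≤ ∑ k, 2 ^ m * x * √(∑ α ∈ antidiagonalTuple n m, ‖eulerCoeff a k α‖ ^ 2) :=
      sum_le_sum fun k _ ↦ sum_filter_norm_le_mul_sqrt_sum_norm_eulerCoeff_sq a k hm.ne'
    _ = 2 ^ m * x * ∑ k, √(∑ α ∈ antidiagonalTuple n m, ‖eulerCoeff a k α‖ ^ 2) :=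
      (mul_sum _ _ _).symm
    _ ≤ 2 ^ m * x * (6 ^ m * polydiscSup n m a) := by
      gcongr
      exact sum_sqrt_sum_norm_eulerCoeff_sq_le a
    _ = 12 ^ m * x * polydiscSup n m a := by
      rw [show (12 : ℝ) = 2 * 6 by norm_num, mul_pow]
      ring
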